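/- arXiv:2407.10051 — 2 statements merged into one kernel-verified Lean document; each statement's English description precedes it below -/
import Mathlib

section
/- The number of pairs (a,b) ∈ (F_q × F_q) \ {(0,0)} whose codeword has Hamming weight wt(a,b) = p^{2m−2}(p−1) is exactly p^m(p^m − p + 1) − 1. -/
open Finset Polynomial

/-- The fibres of a surjective homomorphism of finite groups are equinumerous. -/
lemma card_fiber_mul_card {V W : Type*} [AddCommGroup V] [Fintype V] [AddCommGroup W] [Fintype W]
    [DecidableEq W] (f : V →+ W) (hf : Function.Surjective f) (c : W) :
    #{x | f x = c} * Fintype.card W = Fintype.card V := by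
  have h := card_eq_sum_card_fiberwise (f := f) (s := (univ : Finset V)) (t := univ)
    (fun _ _ => mem_coe.2 (mem_univ _))
  rw [card_univ] at h
  rw [h, sum_congr rfl (fun w _ => AddMonoidHom.card_fiber_eq_of_mem_range f (hf w) (hf c)),
    sum_const, card_univ, smul_eq_mul, mul_comm]

section

variable {p : ℕ} [Fact p.Prime] {F : Type*} [Field F]

/-- On norm-one elements, `w ^ p ^ (t - 1) * Tr w` is given by a polynomial of degree
`2 * p ^ (t - 1)`. -/
noncomputable def tracePoly (F : Type*) [Field F] (p t : ℕ) : F[X] :=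
  ∑ i ∈ range t, (X ^ (p ^ (t - 1) + p ^ i) + X ^ (p ^ (t - 1) - p ^ i))

lemma natDegree_tracePoly_le (t : ℕ) :
    (tracePoly F p t).natDegree ≤ 2 * p ^ (t - 1) := by
  refine natDegree_sum_le_of_forall_le _ _ fun i hi => ?_
  have : p ^ i ≤ p ^ (t - 1) :=
    Nat.pow_le_pow_right (Nat.Prime.pos Fact.out) (by have := mem_range.1 hi; omega)
  refine (natDegree_add_le _ _).trans ?_
  simp only [natDegree_X_pow]
  omega

variable [Algebra (ZMod p) F]

lemma card_fiber_modEq (H : AddSubgroup F) (V : Finset F) (hV : ∀ y, y ∈ V ↔ y ∈ H)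
    (f : F →ₗ[ZMod p] ZMod p) (c : ZMod p) :
    (#{y ∈ V | f y = c} : ℤ) ≡ #{y ∈ V | f y = 0} [ZMOD #V] := by
  by_cases hc : ∃ x ∈ V, f x = c
  · obtain ⟨x, hx, hxc⟩ := hc
    have : #{y ∈ V | f y = c} = #{y ∈ V | f y = 0} := by
      refine card_bij' (fun y _ => y - x) (fun y _ => y + x) ?_ ?_ (by simp) (by simp)
      · intro y hy
        simp only [mem_filter, hV] at *
        exact ⟨H.sub_mem hy.1 hx, by simp [hy.2, hxc]⟩
      · intro y hy
        simp only [mem_filter, hV] at *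
        exact ⟨H.add_mem hy.1 hx, by simp [hy.2, hxc]⟩
    rw [this]
  · push Not at hc
    have h0 : ∀ u ∈ V, f u = 0 := by
      intro u hu
      by_contra hne
      refine hc ((c / f u).val • u) ((hV _).2 (H.nsmul_mem ((hV u).1 hu) _)) ?_
      rw [map_nsmul, nsmul_eq_mul, ZMod.natCast_val, ZMod.cast_id]
      field_simp
    rw [filter_true_of_mem h0, filter_false_of_mem hc]
    simp [Int.ModEq]

local notation "Tr" => Algebra.trace (ZMod p) F

variable [Fintype F]

lemma eval_tracePoly (t : ℕ) (hF : Fintype.card F = p ^ (2 * t)) (w : F)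
    (hw : w ^ (p ^ t + 1) = 1) :
    (tracePoly F p t).eval w = w ^ p ^ (t - 1) * algebraMap (ZMod p) F (Tr w) := by
  have hp : 1 < p := Nat.Prime.one_lt Fact.out
  have hw0 : w ≠ 0 := by rintro rfl; simp at hw
  have hrank : Module.finrank (ZMod p) F = 2 * t := by
    have := Module.card_eq_pow_finrank (K := ZMod p) (V := F)
    rw [hF, ZMod.card] at this
    exact (Nat.pow_right_injective hp this).symm
  rw [FiniteField.algebraMap_trace_eq_sum_pow, hrank, two_mul, sum_range_add, ← sum_add_distrib,
    mul_sum, tracePoly, eval_finsetSum]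
  refine sum_congr rfl fun i hi => ?_
  have hle : p ^ i ≤ p ^ (t - 1) :=
    Nat.pow_le_pow_right (by omega) (by have := mem_range.1 hi; omega)
  simp only [eval_add, eval_pow, eval_X, Nat.card_zmod, mul_add]
  rw [pow_add w]
  congr 1
  have h1 : w ^ p ^ i * w ^ p ^ (t + i) = 1 := by
    rw [← pow_add, show p ^ i + p ^ (t + i) = (p ^ t + 1) * p ^ i by ring, pow_mul, hw, one_pow]
  rw [← mul_right_inj' (pow_ne_zero (p ^ i) hw0), ← pow_add, Nat.add_sub_cancel' hle,
    mul_left_comm, h1, mul_one]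

lemma card_trace_mul_eq {m : ℕ} (hF : Fintype.card F = p ^ m) (b : F) (hb : b ≠ 0) (c : ZMod p) :
    #{y : F | Tr (b * y) = c} = p ^ (m - 1) := by
  have hp : p.Prime := Fact.out
  have hsurj : Function.Surjective (Tr ∘ₗ LinearMap.mulLeft (ZMod p) b) := by
    intro z
    obtain ⟨y, hy⟩ := Algebra.trace_surjective (ZMod p) F z
    exact ⟨b⁻¹ * y, by simp [hb, hy]⟩
  have h := card_fiber_mul_card (Tr ∘ₗ LinearMap.mulLeft (ZMod p) b).toAddMonoidHom hsurj c
  have hm : m ≠ 0 := by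
    rintro rfl
    have h1 := Fintype.one_lt_card (α := F)
    simp [hF] at h1
  rw [ZMod.card, hF, ← Nat.sub_add_cancel (Nat.one_le_iff_ne_zero.2 hm), pow_succ] at h
  exact Nat.eq_of_mul_eq_mul_right hp.pos h

lemma card_trace_eq_and_trace_mul_eq {m : ℕ} (hF : Fintype.card F = p ^ (m + 2)) (a : F)
    (ha : a ∉ Set.range (algebraMap (ZMod p) F)) (c d : ZMod p) :
    #{x : F | Tr x = c ∧ Tr (a * x) = d} = p ^ m := by
  have hp : p.Prime := Fact.out
  obtain ⟨x₁, hx₁⟩ := Algebra.trace_surjective (ZMod p) F 1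
  obtain ⟨x₀, hx₀, hax₀⟩ : ∃ x₀ : F, Tr x₀ = 0 ∧ Tr (a * x₀) ≠ 0 := by
    by_contra! h
    refine ha ⟨Tr (a * x₁), Eq.symm (sub_eq_zero.1 ?_)⟩
    refine (traceForm_nondegenerate (ZMod p) F).1 _ fun x => ?_
    have hx := h (x - Tr x • x₁) (by simp [hx₁])
    rw [mul_sub, mul_smul_comm, map_sub, map_smul, smul_eq_mul] at hx
    rw [Algebra.traceForm_apply, sub_mul, ← Algebra.smul_def, map_sub, map_smul, smul_eq_mul,
      mul_comm (Tr (a * x₁)), hx]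
  let L : F →ₗ[ZMod p] ZMod p × ZMod p :=
    LinearMap.prod Tr (Tr ∘ₗ LinearMap.mulLeft (ZMod p) a)
  have hsurj : Function.Surjective L := by
    rintro ⟨u, v⟩
    refine ⟨u • x₁ + ((v - u * Tr (a * x₁)) / Tr (a * x₀)) • x₀, ?_⟩
    simp [L, hx₁, hx₀, mul_add, hax₀]
  have h := card_fiber_mul_card L.toAddMonoidHom hsurj (c, d)
  rw [Fintype.card_prod, ZMod.card, hF, pow_add, ← sq] at h
  rw [← Nat.eq_of_mul_eq_mul_right (by have := hp.pos; positivity) h]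
  congr 1
  ext x
  simp [L]

/-- The weight of the codeword attached to `(a, b)` with `a` outside the prime field. -/
lemma card_codeword_of_notMem_range {m : ℕ} (hm : 2 ≤ m) (hF : Fintype.card F = p ^ m)
    (f : F → F) (a b : F) (ha : a ∉ Set.range (algebraMap (ZMod p) F)) :
    #{xy : F × F | Tr (xy.1 + f xy.2) = 0 ∧ Tr (a * xy.1 + b * xy.2) ≠ 0} =
      p ^ (2 * m - 2) * (p - 1) := by
  obtain ⟨n, rfl⟩ : ∃ n, m = n + 2 := ⟨m - 2, by omega⟩
  have hfib : ∀ y : F, #{x : F | Tr (x + f y) = 0 ∧ Tr (a * x + b * y) ≠ 0} =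
      p ^ n * (p - 1) := by
    intro y
    have hiff : ∀ x : F, (Tr (x + f y) = 0 ∧ Tr (a * x + b * y) ≠ 0) ↔
        Tr (1 * x) = - Tr (f y) ∧ ¬ Tr (a * x) = - Tr (b * y) := by
      intro x
      rw [map_add, map_add, one_mul, Ne, add_eq_zero_iff_eq_neg, add_eq_zero_iff_eq_neg]
    simp only [hiff]
    have h1 := card_trace_mul_eq hF 1 one_ne_zero (- Tr (f y))
    have h2 := card_trace_eq_and_trace_mul_eq hF a ha (- Tr (f y)) (- Tr (b * y))
    have h3 := card_filter_add_card_filter_not (s := ({x : F | Tr (1 * x) = - Tr (f y)} : Finset F))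
      (fun x => Tr (a * x) = - Tr (b * y))
    rw [filter_filter, filter_filter, h1] at h3
    simp only [one_mul] at h3 ⊢
    rw [h2, show n + 2 - 1 = n + 1 by omega, pow_succ] at h3
    rw [Nat.mul_sub, mul_one, ← h3, Nat.add_sub_cancel_left]
  rw [card_filter, Fintype.sum_prod_type_right]
  simp only [← card_filter, hfib]
  rw [sum_const, card_univ, hF, smul_eq_mul, ← mul_assoc, ← pow_add]
  congr 2
  omega

variable [DecidableEq F]

/-- The weight of the codeword attached to `(k, b)` with `k` in the prime field. -/
lemma card_codeword_algebraMap {m : ℕ} (hF : Fintype.card F = p ^ m)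
    (f : F → F) (k : ZMod p) (b : F) :
    #{xy : F × F | Tr (xy.1 + f xy.2) = 0 ∧ Tr (algebraMap (ZMod p) F k * xy.1 + b * xy.2) ≠ 0} =
      p ^ (m - 1) * (p ^ m - #{y : F | Tr (b * y) = k * Tr (f y)}) := by
  have hfib : ∀ y : F,
      #{x : F | Tr (x + f y) = 0 ∧ Tr (algebraMap (ZMod p) F k * x + b * y) ≠ 0} =
        if ¬ Tr (b * y) = k * Tr (f y) then p ^ (m - 1) else 0 := by
    intro y
    have hiff : ∀ x : F, (Tr (x + f y) = 0 ∧ Tr (algebraMap (ZMod p) F k * x + b * y) ≠ 0) ↔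
        Tr (1 * x) = - Tr (f y) ∧ ¬ Tr (b * y) = k * Tr (f y) := by
      intro x
      rw [map_add, map_add, ← Algebra.smul_def, map_smul, smul_eq_mul, one_mul,
        add_eq_zero_iff_eq_neg]
      refine and_congr_right fun h => ?_
      rw [h, not_iff_not, mul_neg, neg_add_eq_sub, sub_eq_zero]
    simp only [hiff]
    split_ifs with h
    · simp [h]
    · simp only [h, not_false_eq_true, and_true]
      exact card_trace_mul_eq hF 1 one_ne_zero _
  rw [card_filter, Fintype.sum_prod_type_right]
  simp only [← card_filter, hfib]
  rw [← sum_filter, sum_const, smul_eq_mul, mul_comm, ← compl_filter, card_compl, hF]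

lemma card_pow_eq_le (n : ℕ) (hn : 0 < n) (w : F) : #{y : F | y ^ n = w} ≤ n := by
  refine (card_le_card ?_).trans ((Multiset.toFinset_card_le _).trans (card_nthRoots n w))
  intro y hy
  simpa [mem_nthRoots hn] using hy

lemma mapsTo_pow_sub_one (Q : ℕ) (hQ : 1 < Q) (hF : Fintype.card F = Q ^ 2) :
    (((univ : Finset F).erase 0 : Finset F) : Set F).MapsTo
      (fun y => y ^ (Q - 1)) (({w : F | w ^ (Q + 1) = 1} : Finset F) : Set F) := by
  intro y hy
  simp only [coe_erase, coe_univ, Set.mem_sdiff, Set.mem_univ, Set.mem_singleton_iff,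
    true_and] at hy
  simp only [coe_filter, mem_univ, true_and, Set.mem_ofPred_eq]
  rw [← pow_mul, ← FiniteField.pow_card_sub_one_eq_one y hy, hF]
  congr 1
  obtain ⟨n, rfl⟩ : ∃ n, Q = n + 1 := ⟨Q - 1, by omega⟩
  have : (n + 1) ^ 2 = n * (n + 1 + 1) + 1 := by ring
  simp only [Nat.add_sub_cancel]
  omega

/-- If `|F| = Q²`, there are `Q + 1` elements of norm `1`, and the fibres of
`y ↦ y ^ (Q - 1)` over them have `Q - 1` elements each. -/
lemma card_norm_one (Q : ℕ) (hQ : 1 < Q) (hF : Fintype.card F = Q ^ 2) :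
    #{w : F | w ^ (Q + 1) = 1} = Q + 1 ∧
      ∀ w : F, w ^ (Q + 1) = 1 → #{y : F | y ^ (Q - 1) = w} = Q - 1 := by
  obtain ⟨n, rfl⟩ : ∃ n, Q = n + 2 := ⟨Q - 2, by omega⟩
  set U : Finset F := {w : F | w ^ (n + 2 + 1) = 1} with hU
  have hUle : #U ≤ n + 2 + 1 := card_pow_eq_le _ (by omega) 1
  have hle : ∀ w : F, #{y : F | y ^ (n + 2 - 1) = w} ≤ n + 1 :=
    fun w => card_pow_eq_le _ (by omega) w
  have hmaps := mapsTo_pow_sub_one (F := F) _ hQ hF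
  have hsum := card_eq_sum_card_fiberwise hmaps
  rw [card_erase_of_mem (mem_univ _), card_univ, hF] at hsum
  have hsum' : (n + 2) ^ 2 - 1 ≤ ∑ w ∈ U, #{y : F | y ^ (n + 2 - 1) = w} := by
    rw [hsum]
    exact sum_le_sum fun w _ => card_le_card fun y => by simp
  have h1 : (n + 2) ^ 2 - 1 = (n + 3) * (n + 1) := by
    have : (n + 2) ^ 2 = (n + 3) * (n + 1) + 1 := by ring
    omega
  have hUcard : #U = n + 2 + 1 := by
    have h2 : ∑ w ∈ U, #{y : F | y ^ (n + 2 - 1) = w} ≤ #U * (n + 1) := by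
      simpa using sum_le_sum (s := U) fun w _ => hle w
    rw [h1] at hsum'
    have := Nat.le_of_mul_le_mul_right (hsum'.trans h2) (by omega)
    omega
  refine ⟨hUcard, fun w hw => ?_⟩
  have h2 : ∑ w ∈ U, #{y : F | y ^ (n + 2 - 1) = w} = ∑ w ∈ U, (n + 1) := by
    refine le_antisymm (sum_le_sum fun w _ => hle w) ?_
    rw [sum_const, hUcard, smul_eq_mul, ← h1]
    exact hsum'
  have := (sum_eq_sum_iff_of_le fun w _ => hle w).1 h2 w (by simp [hU, hw])
  simpa using this

/-- Summing over the fibres of `y ↦ y ^ (Q - 1)`: modulo `Q`, the number of solutions of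
`Tr(by) = k Tr(y ^ (Q - 1))` is determined by the number of norm-one elements of trace `0`. -/
lemma card_trace_eq_modEq (t Q : ℕ) (hQ : Q = p ^ t) (hQ1 : 1 < Q) (hF : Fintype.card F = Q ^ 2)
    (b : F) (k : ZMod p) (hk : k ≠ 0) :
    (#{y : F | Tr (b * y) = k * Tr (y ^ (Q - 1))} : ℤ) + #{w : F | w ^ (Q + 1) = 1 ∧ Tr w = 0} ≡
      #{y : F | Tr (b * y) = 0} + 1 [ZMOD Q] := by
  have : CharP F p := charP_of_injective_algebraMap (algebraMap (ZMod p) F).injective p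
  obtain ⟨hU, hfib⟩ := card_norm_one Q hQ1 hF
  set U : Finset F := {w : F | w ^ (Q + 1) = 1} with hUdef
  have hmaps := mapsTo_pow_sub_one (F := F) Q hQ1 hF
  have hfibre : ∀ w ∈ U,
      (#{y ∈ (univ : Finset F).erase 0 | Tr (b * y) = k * Tr (y ^ (Q - 1)) ∧ y ^ (Q - 1) = w} : ℤ) ≡
        #{y ∈ (univ : Finset F).erase 0 | Tr (b * y) = 0 ∧ y ^ (Q - 1) = w} +
          (if Tr w = 0 then 0 else 1) [ZMOD Q] := by
    intro w hw
    have hwU : w ^ (Q + 1) = 1 := by simpa [hUdef] using hw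
    have hw0 : w ≠ 0 := by rintro rfl; simp at hwU
    set V : Finset F := insert 0 ({y : F | y ^ (Q - 1) = w} : Finset F) with hV
    have hVcard : #V = Q := by
      rw [hV, card_insert_of_notMem, hfib w hwU]
      · omega
      · simp [show Q - 1 ≠ 0 by omega, hw0.symm]
    let H : AddSubgroup F :=
      ((iterateFrobenius F p t).toAddMonoidHom - AddMonoidHom.mulLeft w).ker
    have hVH : ∀ y, y ∈ V ↔ y ∈ H := by
      intro y
      have : y ∈ H ↔ y ^ Q = w * y := by
        rw [AddMonoidHom.mem_ker]
        simp [iterateFrobenius_def, hQ, sub_eq_zero]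
      rw [this, hV]
      rcases eq_or_ne y 0 with rfl | hy
      · simp [show Q ≠ 0 by omega]
      · simp only [mem_insert, hy, mem_filter, mem_univ, true_and, false_or]
        conv_rhs => rw [show Q = (Q - 1) + 1 by omega, pow_succ]
        simp [hy]
    have key := card_fiber_modEq H V hVH (Tr ∘ₗ LinearMap.mulLeft (ZMod p) b) (k * Tr w)
    rw [hVcard] at key
    have e1 : ({y ∈ (univ : Finset F).erase 0 |
        Tr (b * y) = k * Tr (y ^ (Q - 1)) ∧ y ^ (Q - 1) = w} : Finset F) =
        {y ∈ V | (Tr ∘ₗ LinearMap.mulLeft (ZMod p) b) y = k * Tr w}.erase 0 := by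
      ext y
      simp only [mem_filter, mem_erase, hV, mem_insert, mem_univ, LinearMap.comp_apply,
        LinearMap.mulLeft_apply]
      grind
    have e2 : ({y ∈ (univ : Finset F).erase 0 |
        Tr (b * y) = 0 ∧ y ^ (Q - 1) = w} : Finset F) =
        {y ∈ V | (Tr ∘ₗ LinearMap.mulLeft (ZMod p) b) y = 0}.erase 0 := by
      ext y
      simp only [mem_filter, mem_erase, hV, mem_insert, mem_univ, LinearMap.comp_apply,
        LinearMap.mulLeft_apply]
      grind
    rw [e1, e2]
    have m2 : (0 : F) ∈ ({y ∈ V | (Tr ∘ₗ LinearMap.mulLeft (ZMod p) b) y = 0} : Finset F) := by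
      simp [hV]
    have c2 := card_erase_add_one m2
    by_cases hTw : Tr w = 0
    · simp only [hTw, mul_zero, if_true, add_zero]
      rfl
    · have m1 : (0 : F) ∉
          ({y ∈ V | (Tr ∘ₗ LinearMap.mulLeft (ZMod p) b) y = k * Tr w} : Finset F) := by
        simp only [mem_filter, map_zero]
        rintro ⟨_, h⟩
        exact mul_ne_zero hk hTw h.symm
      rw [erase_eq_of_notMem m1, if_neg hTw]
      rw [← c2] at key
      exact_mod_cast key
  have split : ∀ (P : F → Prop) [DecidablePred P], P 0 →
      (#{y | P y} : ℤ) =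
        ∑ w ∈ U, (#{y ∈ (univ : Finset F).erase 0 | P y ∧ y ^ (Q - 1) = w} : ℤ) + 1 := by
    intro P _ h0
    have m : (0 : F) ∈ ({y | P y} : Finset F) := by simpa
    rw [← card_erase_add_one m, card_eq_sum_card_fiberwise (t := U)
      (f := fun y : F => y ^ (Q - 1)) (hmaps.mono_left (by intro y; simp))]
    push_cast
    congr 1
    refine sum_congr rfl fun w _ => ?_
    congr 2
    ext y
    simp [and_assoc]
  have hQm : Q - 1 ≠ 0 := by omega
  rw [split (fun y => Tr (b * y) = k * Tr (y ^ (Q - 1))) (by simp [hQm]),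
    split (fun y => Tr (b * y) = 0) (by simp)]
  have hs := Int.ModEq.sum hfibre
  rw [sum_add_distrib] at hs
  have hN : (∑ w ∈ U, (if Tr w = 0 then 0 else 1) : ℤ) + #{w : F | w ^ (Q + 1) = 1 ∧ Tr w = 0} =
      Q + 1 := by
    have : #{w : F | w ^ (Q + 1) = 1 ∧ Tr w = 0} = #{w ∈ U | Tr w = 0} := by
      rw [hUdef, filter_filter]
    rw [this, card_filter, Nat.cast_sum, ← sum_add_distrib]
    rw [sum_congr rfl (g := fun _ => (1 : ℤ)) (fun w _ => by split_ifs <;> simp)]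
    simp [hU]
  have h3 := hs.add_right (1 + (#{w : F | w ^ (Q + 1) = 1 ∧ Tr w = 0} : ℤ))
  rw [← add_assoc] at h3
  refine h3.trans ?_
  rw [add_assoc, add_left_comm _ 1, hN]
  have := (Int.modEq_zero_iff_dvd.2 (dvd_refl (Q : ℤ)))
  have h4 := (Int.ModEq.refl (∑ w ∈ U,
    (#{y ∈ (univ : Finset F).erase 0 | Tr (b * y) = 0 ∧ y ^ (Q - 1) = w} : ℤ) + 2)).add this
  convert h4 using 1 <;> ring

lemma card_norm_one_trace_zero_ne (t : ℕ) (ht : 0 < t) (hF : Fintype.card F = p ^ (2 * t)) :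
    #{w : F | w ^ (p ^ t + 1) = 1 ∧ Tr w = 0} ≠ p ^ t + 1 := by
  intro h
  have hp : 2 ≤ p := Nat.Prime.two_le Fact.out
  have hM : 0 < p ^ (t - 1) := by positivity
  have hpt : p ^ t = p * p ^ (t - 1) := by rw [← pow_succ', Nat.sub_add_cancel ht]
  have hzero : tracePoly F p t = 0 := by
    refine eq_zero_of_natDegree_lt_card_of_eval_eq_zero' _
      ({w : F | w ^ (p ^ t + 1) = 1 ∧ Tr w = 0} : Finset F) (fun w hw => ?_) ?_
    · simp only [mem_filter, mem_univ, true_and] at hw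
      rw [eval_tracePoly t hF w hw.1, hw.2, map_zero, mul_zero]
    · have := natDegree_tracePoly_le (p := p) (F := F) t
      rw [h]
      nlinarith
  have hc : (tracePoly F p t).coeff (2 * p ^ (t - 1)) = 1 := by
    simp only [tracePoly, finsetSum_coeff, coeff_add, coeff_X_pow]
    rw [sum_eq_single (t - 1)]
    · rw [if_pos (by ring), if_neg (by omega), add_zero]
    · intro i hi hne
      have : p ^ i < p ^ (t - 1) :=
        Nat.pow_lt_pow_right hp (by have := mem_range.1 hi; omega)
      rw [if_neg (by omega), if_neg (by omega), add_zero]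
    · intro h
      exact absurd (mem_range.2 (by omega)) h
  rw [hzero, coeff_zero] at hc
  exact zero_ne_one hc

lemma zmod_two_eq_one_of_ne_zero : ∀ {z : ZMod 2}, z ≠ 0 → z = 1 := by decide

/-- For `t > 2` the number of norm-one elements of trace `0` is not `1`. -/
lemma card_norm_one_trace_zero_ne_one (t : ℕ) (ht : 2 < t)
    (hF : Fintype.card F = p ^ (2 * t)) :
    #{w : F | w ^ (p ^ t + 1) = 1 ∧ Tr w = 0} ≠ 1 := by
  intro h
  have hp : p.Prime := Fact.out
  have : CharP F p := charP_of_injective_algebraMap (algebraMap (ZMod p) F).injective p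
  obtain ⟨w₀, hw₀⟩ := card_eq_one.1 h
  have huniq : ∀ w : F, (w ^ (p ^ t + 1) = 1 ∧ Tr w = 0) ↔ w = w₀ := fun w => by
    simpa using congrArg (w ∈ ·) hw₀
  obtain ⟨h1, h2⟩ := (huniq w₀).2 rfl
  have hw0 : w₀ ≠ 0 := by rintro rfl; simp at h1
  rcases hp.eq_two_or_odd' with rfl | hodd
  · have hpt : 2 ^ t = 2 * 2 ^ (t - 1) := by rw [← pow_succ', Nat.sub_add_cancel (by omega)]
    have hM : 4 ≤ 2 ^ (t - 1) := by
      calc 4 = 2 ^ 2 := by norm_num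
        _ ≤ 2 ^ (t - 1) := Nat.pow_le_pow_right (by norm_num) (by omega)
    set R : F[X] := tracePoly F 2 t + X ^ 2 ^ (t - 1) + ∑ j ∈ range (2 ^ t + 1), X ^ j with hR
    have hcard := (card_norm_one (F := F) (2 ^ t) (by omega) (by rw [hF]; ring)).1
    have two : (2 : F) = 0 := by exact_mod_cast CharP.cast_eq_zero F 2
    have hone : algebraMap (ZMod 2) F (Algebra.trace (ZMod 2) F (1 : F)) = 0 := by
      have := eval_tracePoly (p := 2) (F := F) t hF 1 (one_pow _)
      rw [one_pow, one_mul] at this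
      rw [← this, tracePoly, eval_finsetSum]
      refine sum_eq_zero fun i _ => ?_
      simp [one_add_one_eq_two, two]
    have hone' : Algebra.trace (ZMod 2) F (1 : F) = 0 := by simpa using hone
    have hw1 : (1 : F) = w₀ := (huniq 1).1 ⟨one_pow _, hone'⟩
    have hzero : R = 0 := by
      refine eq_zero_of_natDegree_lt_card_of_eval_eq_zero' _
        ({w : F | w ^ (2 ^ t + 1) = 1} : Finset F) (fun w hw => ?_) ?_
      · simp only [mem_filter, mem_univ, true_and] at hw
        rw [hR, eval_add, eval_add, eval_tracePoly t hF w hw, eval_finsetSum]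
        simp only [eval_pow, eval_X]
        by_cases hw1' : w = 1
        · subst hw1'
          rw [hone]
          simp [two, show t ≠ 0 by omega]
          linear_combination two
        · have hTw : Algebra.trace (ZMod 2) F w = 1 := by
            have : Algebra.trace (ZMod 2) F w ≠ 0 := fun h0 =>
              hw1' (((huniq w).1 ⟨hw, h0⟩).trans hw1.symm)
            exact zmod_two_eq_one_of_ne_zero this
          have hg : ∑ j ∈ range (2 ^ t + 1), w ^ j = 0 := by
            have := geom_sum_mul w (2 ^ t + 1)
            rw [hw, sub_self] at this
            exact (mul_eq_zero.1 this).resolve_right (sub_ne_zero.2 hw1')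
          rw [hTw, hg, map_one]
          linear_combination w ^ 2 ^ (t - 1) * two
      · rw [hcard]
        have hd : R.natDegree ≤ 2 ^ t := by
          refine natDegree_add_le_of_degree_le (natDegree_add_le_of_degree_le
            ((natDegree_tracePoly_le t).trans hpt.ge) ?_)
            (natDegree_sum_le_of_forall_le _ _ fun j hj => ?_)
          · rw [natDegree_X_pow]; omega
          · rw [natDegree_X_pow]; have := mem_range.1 hj; omega
        omega
    have hc : R.coeff (2 ^ (t - 1) + 3) = 1 := by
      simp only [hR, tracePoly, finsetSum_coeff, coeff_add, coeff_X_pow]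
      rw [sum_eq_zero, if_neg (by omega), sum_ite_eq, if_pos (mem_range.2 (by omega))]
      · simp
      · intro i _
        have h3 : 3 ≠ 2 ^ i := by
          rcases i with _ | i
          · norm_num
          · rw [pow_succ]; omega
        have hne : ∀ M u : ℕ, 3 ≠ u → M + 3 ≠ M + u ∧ M + 3 ≠ M - u := by omega
        rw [if_neg (hne _ _ h3).1, if_neg (hne _ _ h3).2, add_zero]
    rw [hzero, coeff_zero] at hc
    exact zero_ne_one hc
  · have hev : Even (p ^ t + 1) := (hodd.pow).add_one
    have hneg : -w₀ = w₀ := (huniq _).1 ⟨by rw [hev.neg_pow, h1], by rw [map_neg, h2, neg_zero]⟩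
    have h2w : (2 : F) * w₀ = 0 := by linear_combination -hneg
    have h20 : ((2 : ℕ) : F) = 0 := by exact_mod_cast (mul_eq_zero.1 h2w).resolve_right hw0
    have := (Nat.prime_dvd_prime_iff_eq hp Nat.prime_two).1 ((CharP.cast_eq_zero_iff F p 2).1 h20)
    subst this
    exact absurd hodd (by decide)

/-- For `k ≠ 0` the map `y ↦ Tr(by) - k Tr(y ^ (p ^ t - 1))` is never balanced at `0`. -/
lemma card_trace_eq_ne (t : ℕ) (ht : 2 < t) (hF : Fintype.card F = p ^ (2 * t))
    (b : F) (k : ZMod p) (hk : k ≠ 0) :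
    #{y : F | Tr (b * y) = k * Tr (y ^ (p ^ t - 1))} ≠ p ^ (2 * t - 1) := by
  intro h
  have hp : p.Prime := Fact.out
  have hQ1 : 1 < p ^ t := Nat.one_lt_pow (by omega) hp.one_lt
  have hFQ : Fintype.card F = (p ^ t) ^ 2 := by rw [hF]; ring
  have key := card_trace_eq_modEq (F := F) t (p ^ t) rfl hQ1 hFQ b k hk
  set N := #{w : F | w ^ (p ^ t + 1) = 1 ∧ Tr w = 0} with hN
  have hNle : N ≤ p ^ t + 1 := by
    rw [← (card_norm_one (F := F) (p ^ t) hQ1 hFQ).1]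
    exact card_le_card fun w hw => by simp at hw ⊢; exact hw.1
  have hN1 := card_norm_one_trace_zero_ne_one (p := p) (F := F) t ht hF
  have hNQ := card_norm_one_trace_zero_ne (p := p) (F := F) t (by omega) hF
  have hdvd : p ^ t ∣ #{y : F | Tr (b * y) = 0} := by
    by_cases hb : b = 0
    · simp [hb, hF, pow_dvd_pow p (show t ≤ 2 * t by omega)]
    · rw [card_trace_mul_eq hF b hb 0]
      exact pow_dvd_pow p (by omega)
  rw [h] at key
  have h1 : (((p ^ (2 * t - 1) : ℕ) : ℤ)) ≡ 0 [ZMOD (p ^ t : ℕ)] :=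
    Int.modEq_zero_iff_dvd.2 (Int.natCast_dvd_natCast.2 (pow_dvd_pow p (by omega)))
  have h2 : ((#{y : F | Tr (b * y) = 0} : ℕ) : ℤ) ≡ 0 [ZMOD (p ^ t : ℕ)] :=
    Int.modEq_zero_iff_dvd.2 (Int.natCast_dvd_natCast.2 hdvd)
  have h3 := ((h1.add_right (N : ℤ)).symm.trans key).trans (h2.add_right 1)
  rw [zero_add, zero_add] at h3
  obtain ⟨c, hc⟩ := h3.symm.dvd
  have hQz : (1 : ℤ) < (p ^ t : ℕ) := by exact_mod_cast hQ1
  have hNz : (N : ℤ) ≤ (p ^ t : ℕ) + 1 := by exact_mod_cast hNle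
  have hN0 : (0 : ℤ) ≤ N := by positivity
  have c1 : c < 2 := by nlinarith
  have c0 : -1 < c := by nlinarith
  obtain rfl | rfl : c = 0 ∨ c = 1 := by omega
  · exact hN1 (by change N = 1; omega)
  · exact hNQ (by change N = p ^ t + 1; omega)

end

/-- The number of pairs `(a,b) ≠ (0,0)` whose codeword has Hamming weight
`p^{2m-2}(p-1)` is exactly `p^m(p^m - p + 1) - 1`. -/
theorem stmt10 (p t m : ℕ) [Fact p.Prime] (ht : 2 < t) (hm : m = 2 * t)
    (F : Type) [Field F] [Fintype F] [DecidableEq F] [Algebra (ZMod p) F]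
    (hF : Fintype.card F = p ^ m)
    (wt : F → F → ℕ)
    (hwt : ∀ a b : F, wt a b = Set.ncard {xy : F × F | xy ≠ (0, 0) ∧
      Algebra.trace (ZMod p) F (xy.1 + xy.2 ^ (p ^ t - 1)) = 0 ∧
      Algebra.trace (ZMod p) F (a * xy.1 + b * xy.2) ≠ 0}) :
    Set.ncard {ab : F × F | ab ≠ (0, 0) ∧ wt ab.1 ab.2 = p ^ (2 * m - 2) * (p - 1)}
      = p ^ m * (p ^ m - p + 1) - 1 := by
  have hp : p.Prime := Fact.out
  have hm2 : 2 ≤ m := by omega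
  have hQ : p ^ t - 1 ≠ 0 := by
    have := Nat.one_lt_pow (show t ≠ 0 by omega) hp.one_lt
    omega
  have hwt' : ∀ a b : F, wt a b = #{xy : F × F |
      Algebra.trace (ZMod p) F (xy.1 + xy.2 ^ (p ^ t - 1)) = 0 ∧
      Algebra.trace (ZMod p) F (a * xy.1 + b * xy.2) ≠ 0} := by
    intro a b
    rw [hwt, ← Set.ncard_coe_finset]
    congr 1
    ext ⟨x, y⟩
    simp only [Set.mem_ofPred_eq, coe_filter, mem_univ, true_and, and_iff_right_iff_imp]
    rintro ⟨-, h⟩ h0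
    obtain ⟨rfl, rfl⟩ := Prod.mk.inj h0
    simp at h
  set R : Finset F := univ.image (algebraMap (ZMod p) F) with hR
  have hRcard : #R = p := by
    rw [hR, card_image_of_injective _ (algebraMap (ZMod p) F).injective, card_univ, ZMod.card]
  have hweight : ∀ a b : F, (a, b) ≠ (0, 0) →
      (wt a b = p ^ (2 * m - 2) * (p - 1) ↔ a ∈ (R.erase 0)ᶜ) := by
    intro a b hab
    rw [hwt']
    by_cases ha : a ∈ R
    · obtain ⟨k, -, rfl⟩ := mem_image.1 ha
      rw [card_codeword_algebraMap hF (fun y => y ^ (p ^ t - 1)) k b]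
      set N := #{y : F | Algebra.trace (ZMod p) F (b * y) =
        k * Algebra.trace (ZMod p) F (y ^ (p ^ t - 1))} with hN
      have hNle : N ≤ p ^ m := by
        rw [← hF]
        exact card_le_univ _
      have hN_iff : p ^ (m - 1) * (p ^ m - N) = p ^ (2 * m - 2) * (p - 1) ↔ N = p ^ (m - 1) := by
        have e1 : p ^ (2 * m - 2) * (p - 1) = p ^ (m - 1) * (p ^ m - p ^ (m - 1)) := by
          rw [show 2 * m - 2 = (m - 1) + (m - 1) by omega, pow_add, mul_assoc]
          congr 1
          conv_rhs => rw [show m = (m - 1) + 1 by omega, pow_succ, Nat.add_sub_cancel]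
          rw [Nat.mul_sub, mul_one]
        have hle : p ^ (m - 1) ≤ p ^ m := Nat.pow_le_pow_right hp.pos (by omega)
        rw [e1, Nat.mul_right_inj (pow_ne_zero _ hp.ne_zero)]
        omega
      rw [hN_iff]
      rcases eq_or_ne k 0 with rfl | hk
      · have hb : b ≠ 0 := by
          rintro rfl
          simp at hab
        have : N = p ^ (m - 1) := by
          rw [← card_trace_mul_eq hF b hb 0, hN]
          simp only [zero_mul]
        simp [this]
      · have h1 : N ≠ p ^ (m - 1) := by
          subst hm
          exact card_trace_eq_ne t ht hF b k hk
        simp [h1, hR, hk]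
    · rw [card_codeword_of_notMem_range hm2 hF (fun y => y ^ (p ^ t - 1)) a b
        (by simpa [hR] using ha)]
      simp [ha]
  have hset : {ab : F × F | ab ≠ (0, 0) ∧ wt ab.1 ab.2 = p ^ (2 * m - 2) * (p - 1)} =
      ((((R.erase 0)ᶜ ×ˢ (univ : Finset F)).erase (0, 0) : Finset (F × F)) : Set (F × F)) := by
    ext ⟨a, b⟩
    simp only [Set.mem_ofPred_eq, coe_erase, Set.mem_sdiff, mem_coe, mem_product, mem_univ,
      and_true, Set.mem_singleton_iff]
    rw [and_comm]
    exact and_congr_left fun h => hweight a b h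
  have h0 : (0 : F) ∈ R := mem_image.2 ⟨0, mem_univ _, map_zero _⟩
  have hpm : p ≤ p ^ m := Nat.le_self_pow (by omega) p
  rw [hset, Set.ncard_coe_finset, card_erase_of_mem (by simp), card_product, card_univ,
    card_compl, card_erase_of_mem h0, hRcard, hF, mul_comm]
  have := hp.pos
  congr 2
  omega
end

section
/- The number of pairs (a,b) with a a nonzero element of the prime subfield F_p, b ∈ F_q^*, and such that the unique v ∈ Γ with Tr_{q/t}(bv) = 0 satisfies Tr(v^{p^t−1}) = 0, is exactly ((p−1)(p^m−1) + (p^{t+1} − p^t − p + 1)·S)/p; moreover every such pair satisfies wt(a,b) = (p^{2m−2} − p^{m−2})(p−1) − p^{m−2}(p^t(p−1) − S). -/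
open Finset

theorem AddMonoidHom.card_fiber_mul_card {G H : Type*} [AddGroup G] [Fintype G] [AddGroup H]
    [Fintype H] [DecidableEq H] (f : G →+ H) (hf : Function.Surjective f) (h : H) :
    #{g | f g = h} * Fintype.card H = Fintype.card G := by
  have key := Finset.card_eq_sum_card_fiberwise (s := (univ : Finset G)) (t := (univ : Finset H))
    (f := f) (fun _ _ => by simp)
  rw [Finset.sum_congr rfl (fun x _ =>
    AddMonoidHom.card_fiber_eq_of_mem_range f (hf x) (hf h))] at key
  simpa [mul_comm] using key.symm

namespace QuadraticFiniteField

theorem sum_zmod_trace_eq {p : ℕ} [Fact p.Prime] {F : Type*} [Field F]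
    [Algebra (ZMod p) F] {ζ : ℂ} (hζ : IsPrimitiveRoot ζ p) (A : Finset F) :
    ∑ z ∈ ({0}ᶜ : Finset (ZMod p)), ∑ x ∈ A,
        ζ ^ (Algebra.trace (ZMod p) F (algebraMap (ZMod p) F z * x)).val =
      p * #{u ∈ A | Algebra.trace (ZMod p) F u = 0} - #A := by
  have hψ := AddChar.zmodChar_primitive_of_primitive_root p hζ
  rw [sum_comm, Finset.card_filter, Nat.cast_sum, mul_sum, Finset.card_eq_sum_ones, Nat.cast_sum,
    ← sum_sub_distrib]
  refine Finset.sum_congr rfl fun x _ => ?_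
  have h := AddChar.sum_mulShift (Algebra.trace (ZMod p) F x) hψ
  simp only [AddChar.zmodChar_apply] at h
  rw [← Finset.sum_compl_add_sum {0}, sum_singleton] at h
  simp only [← Algebra.smul_def, map_smul, smul_eq_mul]
  rw [zero_mul, ZMod.val_zero, pow_zero, ZMod.card] at h
  rw [eq_sub_of_add_eq h]
  split_ifs <;> simp

variable {F : Type*} [Field F] [Fintype F] {Q : ℕ}

theorem algebraMap_trace (E : Subfield F) (hE : Nat.card E = Q) (hF : Fintype.card F = Q ^ 2)
    (x : F) : ((Algebra.trace E F x : E) : F) = x + x ^ Q := by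
  have h1 : 1 < Q := hE ▸ Finite.one_lt_card
  have hr : Module.finrank E F = 2 := by
    have := Module.natCard_eq_pow_finrank (K := E) (V := F)
    rw [hE, Nat.card_eq_fintype_card, hF] at this
    exact (Nat.pow_right_injective h1 this).symm
  have := FiniteField.algebraMap_trace_eq_sum_pow E F x
  rw [hr, hE] at this
  simp only [Finset.sum_range_succ, Finset.sum_range_zero, pow_zero, pow_one, zero_add] at this
  exact this

theorem pow_sub_one_eq_one_of_mem (E : Subfield F) (hE : Nat.card E = Q) {y : F} (hy : y ≠ 0)
    (h : y ∈ E) : y ^ (Q - 1) = 1 := by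
  classical
  have : Fintype E := Fintype.ofFinite E
  have h2 := FiniteField.pow_card_sub_one_eq_one (⟨y, h⟩ : E) (by simpa [Subtype.ext_iff] using hy)
  rw [← Nat.card_eq_fintype_card, hE] at h2
  simpa [Subtype.ext_iff] using h2

theorem mem_of_pow_sub_one_eq_one (E : Subfield F) (hE : Nat.card E = Q) {y : F}
    (h : y ^ (Q - 1) = 1) : y ∈ E := by
  classical
  have h1 : 1 < Q := hE ▸ Finite.one_lt_card
  have : Fintype E := Fintype.ofFinite E
  set A : Finset F := ({0}ᶜ : Finset E).image (Subtype.val : E → F) with hA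
  have hcA : #A = Q - 1 := by
    rw [hA, Finset.card_image_of_injective _ Subtype.val_injective, Finset.card_compl,
      ← Nat.card_eq_fintype_card, hE, Finset.card_singleton]
  have hsub : A ⊆ Polynomial.nthRootsFinset (Q - 1) (1 : F) := by
    intro z hz
    obtain ⟨e, he, rfl⟩ := Finset.mem_image.1 hz
    rw [Polynomial.mem_nthRootsFinset (by omega)]
    exact pow_sub_one_eq_one_of_mem E hE (by simpa using he) e.2
  have heq : A = Polynomial.nthRootsFinset (Q - 1) (1 : F) := by
    refine Finset.eq_of_subset_of_card_le hsub ?_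
    rw [hcA, Polynomial.nthRootsFinset_def]
    exact (Multiset.toFinset_card_le _).trans (Polynomial.card_nthRoots _ _)
  have : y ∈ A := by rw [heq, Polynomial.mem_nthRootsFinset (by omega)]; exact h
  obtain ⟨e, -, rfl⟩ := Finset.mem_image.1 this
  exact e.2

theorem exists_pow_sub_one_eq (h1 : 1 < Q) (hF : Fintype.card F = Q ^ 2) {u : F}
    (hu : u ^ (Q + 1) = 1) : ∃ v : F, v ≠ 0 ∧ v ^ (Q - 1) = u := by
  classical
  obtain ⟨α, hα⟩ := IsCyclic.exists_generator (α := Fˣ)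
  have hu0 : u ≠ 0 := by rintro rfl; simp at hu
  obtain ⟨k, hk⟩ := (mem_powers_iff_mem_zpowers (x := α)).2 (hα (Units.mk0 u hu0))
  have hk' : α ^ k = Units.mk0 u hu0 := hk
  have ho : orderOf α = (Q - 1) * (Q + 1) := by
    rw [orderOf_eq_card_of_forall_mem_zpowers hα, Nat.card_eq_fintype_card, Fintype.card_units, hF]
    zify [h1.le, Nat.one_le_pow 2 Q (by omega)]
    ring
  have hd : α ^ (k * (Q + 1)) = 1 := by
    rw [pow_mul, hk']; ext; simpa using hu
  rw [← orderOf_dvd_iff_pow_eq_one, ho] at hd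
  obtain ⟨j, rfl⟩ := Nat.dvd_of_mul_dvd_mul_right (by omega) hd
  refine ⟨(α : F) ^ j, pow_ne_zero _ α.ne_zero, ?_⟩
  have := congrArg Units.val hk'
  simp only [Units.val_pow_eq_pow_val, Units.val_mk0] at this
  rw [← this, ← pow_mul, mul_comm]

theorem pow_sub_one_pow_add_one (h1 : 1 < Q) (hF : Fintype.card F = Q ^ 2) {y : F} (hy : y ≠ 0) :
    (y ^ (Q - 1)) ^ (Q + 1) = 1 := by
  have : (Q - 1) * (Q + 1) = Q ^ 2 - 1 := by
    zify [h1.le, Nat.one_le_pow 2 Q (by omega)]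
    ring
  rw [← pow_mul, this, ← hF]
  exact FiniteField.pow_card_sub_one_eq_one y hy

theorem card_pow_sub_one_fiber [DecidableEq F] (E : Subfield F) [Fintype E] [DecidableEq E]
    (hE : Nat.card E = Q) {v : F} (hv : v ≠ 0) (R : F → Prop) [DecidablePred R] :
    #{y : F | (y ≠ 0 ∧ R y) ∧ y ^ (Q - 1) = v ^ (Q - 1)} = #{e : E | e ≠ 0 ∧ R (e * v)} := by
  symm
  refine Finset.card_bij (fun e _ => (e : F) * v) ?_ ?_ ?_
  · intro e he
    simp only [mem_filter, mem_univ, true_and] at he ⊢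
    have he0 : (e : F) ≠ 0 := by simpa using he.1
    exact ⟨⟨mul_ne_zero he0 hv, he.2⟩, by
      rw [mul_pow, pow_sub_one_eq_one_of_mem E hE he0 e.2, one_mul]⟩
  · intro e _ e' _ h
    exact Subtype.ext (mul_right_cancel₀ hv h)
  · intro y hy
    simp only [mem_filter, mem_univ, true_and] at hy
    refine ⟨⟨y / v, mem_of_pow_sub_one_eq_one E hE ?_⟩, ?_, div_mul_cancel₀ _ hv⟩
    · rw [div_pow, hy.2, div_self (pow_ne_zero _ hv)]
    · simp only [mem_filter, mem_univ, true_and, div_mul_cancel₀ _ hv]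
      refine ⟨?_, hy.1.2⟩
      simpa [Subtype.ext_iff] using ⟨hy.1.1, hv⟩

theorem card_eq_sum_fibers [DecidableEq F] (h1 : 1 < Q) (hF : Fintype.card F = Q ^ 2)
    (R : F → Prop) [DecidablePred R] :
    #{y : F | y ≠ 0 ∧ R y} =
      ∑ u ∈ univ.filter (fun u : F => u ^ (Q + 1) = 1),
        #{y : F | (y ≠ 0 ∧ R y) ∧ y ^ (Q - 1) = u} := by
  rw [Finset.card_eq_sum_card_fiberwise (f := fun y : F => y ^ (Q - 1))
    (t := univ.filter (fun u : F => u ^ (Q + 1) = 1))]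
  · simp only [Finset.filter_filter]
  · intro y hy
    simp only [coe_filter, mem_univ, true_and, Set.mem_ofPred_eq] at hy ⊢
    exact pow_sub_one_pow_add_one h1 hF hy.1

theorem card_pow_add_one_eq_one [DecidableEq F] (E : Subfield F) (hE : Nat.card E = Q)
    (hF : Fintype.card F = Q ^ 2) : #{u : F | u ^ (Q + 1) = 1} = Q + 1 := by
  classical
  have : Fintype E := Fintype.ofFinite E
  have h1 : 1 < Q := hE ▸ Finite.one_lt_card
  have key := card_eq_sum_fibers (Q := Q) h1 hF (fun _ : F => True)
  have hfib : ∀ u ∈ univ.filter (fun u : F => u ^ (Q + 1) = 1),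
      #{y : F | (y ≠ 0 ∧ True) ∧ y ^ (Q - 1) = u} = Q - 1 := by
    intro u hu
    obtain ⟨v, hv, rfl⟩ := exists_pow_sub_one_eq h1 hF (mem_filter.1 hu).2
    rw [card_pow_sub_one_fiber E hE hv (fun _ => True)]
    simp only [and_true, Finset.filter_ne', Finset.card_erase_of_mem (mem_univ _), Finset.card_univ]
    rw [← Nat.card_eq_fintype_card, hE]
  rw [Finset.sum_congr rfl hfib] at key
  simp only [and_true, Finset.filter_ne', Finset.card_erase_of_mem (mem_univ _), Finset.card_univ,
    hF, sum_const, smul_eq_mul] at key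
  have h3 : (Q + 1) * (Q - 1) = Q ^ 2 - 1 := by
    zify [h1.le, Nat.one_le_pow 2 Q (by omega)]
    ring
  exact Nat.eq_of_mul_eq_mul_right (by omega) (key.symm.trans h3.symm)


theorem neg_inv_pow_sub_one_pow_add_one (E : Subfield F) (hE : Nat.card E = Q)
    (hF : Fintype.card F = Q ^ 2) {b : F} (hb : b ≠ 0) :
    (-(b⁻¹) ^ (Q - 1)) ^ (Q + 1) = 1 := by
  have h1 : 1 < Q := hE ▸ Finite.one_lt_card
  have hneg : (-1 : F) ^ (Q + 1) = 1 := by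
    have h := pow_sub_one_eq_one_of_mem E hE (y := -1) (by simp) (neg_mem E.one_mem)
    rw [show Q + 1 = (Q - 1) + 2 by omega, pow_add, h]
    simp
  rw [neg_pow, hneg, pow_sub_one_pow_add_one h1 hF (inv_ne_zero hb), one_mul]

theorem trace_mul_eq_zero_iff (E : Subfield F) (hE : Nat.card E = Q)
    (hF : Fintype.card F = Q ^ 2) {b v : F} (hb : b ≠ 0) (hv : v ≠ 0) :
    Algebra.trace E F (b * v) = 0 ↔ v ^ (Q - 1) = -(b⁻¹) ^ (Q - 1) := by
  have h1 : 1 < Q := hE ▸ Finite.one_lt_card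
  have h2 : b * v + (b * v) ^ Q = (b * v) * b ^ (Q - 1) * (v ^ (Q - 1) + (b⁻¹) ^ (Q - 1)) := by
    have h3 : b ^ (Q - 1) * (b⁻¹) ^ (Q - 1) = 1 := by
      rw [← mul_pow, mul_inv_cancel₀ hb, one_pow]
    have h4 : (b * v) ^ Q = (b * v) * (b * v) ^ (Q - 1) := by
      rw [← pow_succ', Nat.sub_add_cancel h1.le]
    rw [h4, mul_pow]
    linear_combination (-(b * v)) * h3
  rw [← ZeroMemClass.coe_eq_zero, algebraMap_trace E hE hF, h2, mul_eq_zero,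
    or_iff_right (mul_ne_zero (mul_ne_zero hb hv) (pow_ne_zero _ hb)), add_eq_zero_iff_eq_neg]

variable {p : ℕ} [Fact p.Prime] [Algebra (ZMod p) F]

theorem trace_trace_subfield (E : Subfield F) [Algebra (ZMod p) E] (x : F) :
    Algebra.trace (ZMod p) E (Algebra.trace E F x) = Algebra.trace (ZMod p) F x := by
  have : @IsScalarTower (ZMod p) E F Algebra.toSMul Algebra.toSMul Algebra.toSMul :=
    IsScalarTower.of_algebraMap_eq' (Subsingleton.elim _ _)
  exact Algebra.trace_trace x

theorem trace_pow_card (E : Subfield F) [Algebra (ZMod p) E]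
    (hE : Nat.card E = Q) (hF : Fintype.card F = Q ^ 2) (x : F) :
    Algebra.trace (ZMod p) F (x ^ Q) = Algebra.trace (ZMod p) F x := by
  rw [← trace_trace_subfield E, ← trace_trace_subfield E x]
  congr 1
  apply Subtype.ext
  rw [algebraMap_trace E hE hF, algebraMap_trace E hE hF, ← pow_mul, ← sq, ← hF,
    FiniteField.pow_card, add_comm]

theorem trace_neg_inv_pow_sub_one (E : Subfield F) [Algebra (ZMod p) E]
    (hE : Nat.card E = Q) (hF : Fintype.card F = Q ^ 2) {b : F} (hb : b ≠ 0) :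
    Algebra.trace (ZMod p) F (-(b⁻¹) ^ (Q - 1)) = -Algebra.trace (ZMod p) F (b ^ (Q - 1)) := by
  have h1 : 1 < Q := hE ▸ Finite.one_lt_card
  have h : (b⁻¹) ^ (Q - 1) = (b ^ (Q - 1)) ^ Q := by
    rw [inv_pow, inv_eq_of_mul_eq_one_right]
    rw [← pow_succ']
    exact pow_sub_one_pow_add_one h1 hF hb
  rw [map_neg, h, trace_pow_card E hE hF]

theorem card_trace_mul_fiber (K : Type*) [Field K] [Fintype K] [Algebra (ZMod p) K] {c : K}
    (hc : c ≠ 0) (r : ZMod p) :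
    #{e : K | Algebra.trace (ZMod p) K (e * c) = r} * p = Fintype.card K := by
  have h := AddMonoidHom.card_fiber_mul_card
    ((Algebra.trace (ZMod p) K).toAddMonoidHom.comp (AddMonoidHom.mulRight c)) (fun x => by
      obtain ⟨y, rfl⟩ := Algebra.trace_surjective (ZMod p) K x
      exact ⟨y / c, by simp [div_mul_cancel₀ _ hc]⟩) r
  rw [ZMod.card] at h
  exact h

theorem card_pow_sub_one_fiber_trace_eq [DecidableEq F] (E : Subfield F) [Algebra (ZMod p) E]
    (hE : Nat.card E = Q) (hF : Fintype.card F = Q ^ 2)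
    {a : ZMod p} (ha : a ≠ 0) {b : F} (hb : b ≠ 0)
    (htb : Algebra.trace (ZMod p) F (b ^ (Q - 1)) = 0) {u : F} (hu : u ^ (Q + 1) = 1) :
    p * #{y : F | (y ≠ 0 ∧ Algebra.trace (ZMod p) F (b * y) =
        a * Algebra.trace (ZMod p) F (y ^ (Q - 1))) ∧ y ^ (Q - 1) = u} +
      p * (if Algebra.trace (ZMod p) F u = 0 then 1 else 0) =
    if u = -(b⁻¹) ^ (Q - 1) then p * Q else Q := by
  classical
  have : Fintype E := Fintype.ofFinite E
  have h1 : 1 < Q := hE ▸ Finite.one_lt_card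
  have hcE : Fintype.card E = Q := by rw [← Nat.card_eq_fintype_card, hE]
  obtain ⟨v, hv, rfl⟩ := exists_pow_sub_one_eq h1 hF hu
  rw [card_pow_sub_one_fiber E hE hv (fun y => Algebra.trace (ZMod p) F (b * y) =
        a * Algebra.trace (ZMod p) F (y ^ (Q - 1)))]
  set c := Algebra.trace E F (b * v) with hc
  have htr : ∀ e : E, Algebra.trace (ZMod p) F (b * (e * v)) =
      Algebra.trace (ZMod p) E (e * c) := by
    intro e
    rw [← trace_trace_subfield E, hc, ← smul_eq_mul e, ← map_smul]
    congr 2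
    rw [Subfield.smul_def, smul_eq_mul]
    ring
  have hset : (univ.filter fun e : E => e ≠ 0 ∧ Algebra.trace (ZMod p) F (b * (e * v)) =
        a * Algebra.trace (ZMod p) F ((e * v) ^ (Q - 1))) =
      univ.filter fun e : E => e ≠ 0 ∧ Algebra.trace (ZMod p) E (e * c) =
        a * Algebra.trace (ZMod p) F (v ^ (Q - 1)) := by
    ext e
    simp only [mem_filter, mem_univ, true_and]
    refine and_congr_right fun he => ?_
    rw [htr, mul_pow, pow_sub_one_eq_one_of_mem E hE (by simpa using he) e.2, one_mul]
  rw [hset]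
  have hfe : (univ.filter fun e : E => e ≠ 0 ∧ Algebra.trace (ZMod p) E (e * c) =
        a * Algebra.trace (ZMod p) F (v ^ (Q - 1))) =
      (univ.filter fun e : E => Algebra.trace (ZMod p) E (e * c) =
        a * Algebra.trace (ZMod p) F (v ^ (Q - 1))).erase 0 := by
    ext e; simp
  have hcard : #(univ.filter fun e : E => e ≠ 0 ∧ Algebra.trace (ZMod p) E (e * c) =
        a * Algebra.trace (ZMod p) F (v ^ (Q - 1))) +
      (if Algebra.trace (ZMod p) F (v ^ (Q - 1)) = 0 then 1 else 0) =
      #(univ.filter fun e : E => Algebra.trace (ZMod p) E (e * c) =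
        a * Algebra.trace (ZMod p) F (v ^ (Q - 1))) := by
    rw [hfe]
    split_ifs with h0
    · exact Finset.card_erase_add_one (by simp [h0])
    · rw [Finset.erase_eq_of_notMem, add_zero]
      simp only [mem_filter, mem_univ, true_and, zero_mul, map_zero]
      exact fun h => (mul_ne_zero ha h0) h.symm
  rw [← mul_add, hcard]
  split_ifs with hu0
  · have hc0 := (trace_mul_eq_zero_iff E hE hF hb hv).2 hu0
    rw [hu0, trace_neg_inv_pow_sub_one E hE hF hb, htb, hc, hc0]
    simp [hcE]
  · rw [mul_comm, card_trace_mul_fiber E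
      (fun h => hu0 ((trace_mul_eq_zero_iff E hE hF hb hv).1 h)), hcE]

theorem card_trace_mul_eq_mul_trace_pow [DecidableEq F] (E : Subfield F) [Algebra (ZMod p) E]
    (hE : Nat.card E = Q) (hF : Fintype.card F = Q ^ 2)
    {a : ZMod p} (ha : a ≠ 0) {b : F} (hb : b ≠ 0)
    (htb : Algebra.trace (ZMod p) F (b ^ (Q - 1)) = 0) :
    p * #{y : F | Algebra.trace (ZMod p) F (b * y) =
        a * Algebra.trace (ZMod p) F (y ^ (Q - 1))} +
      p * #{u : F | u ^ (Q + 1) = 1 ∧ Algebra.trace (ZMod p) F u = 0} =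
    Q ^ 2 + p * Q + p := by
  have h1 : 1 < Q := hE ▸ Finite.one_lt_card
  have hz : #{y : F | Algebra.trace (ZMod p) F (b * y) =
        a * Algebra.trace (ZMod p) F (y ^ (Q - 1))} =
      #{y : F | y ≠ 0 ∧ Algebra.trace (ZMod p) F (b * y) =
        a * Algebra.trace (ZMod p) F (y ^ (Q - 1))} + 1 := by
    rw [← Finset.card_erase_add_one (a := 0)
      (s := univ.filter fun y : F => Algebra.trace (ZMod p) F (b * y) =
        a * Algebra.trace (ZMod p) F (y ^ (Q - 1)))]
    · congr 2
      ext y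
      simp
    · simp [zero_pow (show Q - 1 ≠ 0 by omega)]
  have hsum := Finset.sum_congr rfl (fun u hu =>
    card_pow_sub_one_fiber_trace_eq E hE hF ha hb htb
      (mem_filter.1 (show u ∈ univ.filter (fun u : F => u ^ (Q + 1) = 1) from hu)).2)
  rw [sum_add_distrib, ← mul_sum, ← mul_sum, ← card_eq_sum_fibers h1 hF, ← Finset.card_filter,
    Finset.filter_filter] at hsum
  have hu0 : -(b⁻¹) ^ (Q - 1) ∈ univ.filter (fun u : F => u ^ (Q + 1) = 1) := by
    simpa using neg_inv_pow_sub_one_pow_add_one E hE hF hb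
  rw [← Finset.add_sum_erase _ _ hu0, if_pos rfl, Finset.sum_congr rfl (fun u hu =>
    if_neg (Finset.ne_of_mem_erase hu)), sum_const, Finset.card_erase_of_mem hu0,
    card_pow_add_one_eq_one E hE hF, smul_eq_mul, Nat.add_sub_cancel] at hsum
  rw [hz]
  linarith

theorem card_trace_pow_sub_one_eq_zero [DecidableEq F] (E : Subfield F) (hE : Nat.card E = Q)
    (hF : Fintype.card F = Q ^ 2) :
    #{b : F | b ≠ 0 ∧ Algebra.trace (ZMod p) F (b ^ (Q - 1)) = 0} =
      #{u : F | u ^ (Q + 1) = 1 ∧ Algebra.trace (ZMod p) F u = 0} * (Q - 1) := by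
  classical
  have : Fintype E := Fintype.ofFinite E
  have h1 : 1 < Q := hE ▸ Finite.one_lt_card
  rw [card_eq_sum_fibers h1 hF, ← Finset.filter_filter, Finset.card_filter, Finset.sum_mul]
  refine Finset.sum_congr rfl fun u hu => ?_
  split_ifs with h0
  · obtain ⟨v, hv, rfl⟩ := exists_pow_sub_one_eq h1 hF (mem_filter.1 hu).2
    have hset : (univ.filter fun y : F => (y ≠ 0 ∧ Algebra.trace (ZMod p) F (y ^ (Q - 1)) = 0) ∧
        y ^ (Q - 1) = v ^ (Q - 1)) =
        univ.filter fun y : F => (y ≠ 0 ∧ True) ∧ y ^ (Q - 1) = v ^ (Q - 1) := by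
      ext y
      simp only [mem_filter, mem_univ, true_and, and_true]
      exact ⟨fun h => ⟨h.1.1, h.2⟩, fun h => ⟨⟨h.1, h.2 ▸ h0⟩, h.2⟩⟩
    rw [hset, card_pow_sub_one_fiber E hE hv (fun _ => True)]
    simp only [and_true, Finset.filter_ne', Finset.card_erase_of_mem (mem_univ _), Finset.card_univ]
    rw [← Nat.card_eq_fintype_card, hE, one_mul]
  · rw [zero_mul, Finset.card_eq_zero, Finset.filter_eq_empty_iff]
    rintro y - ⟨⟨-, hy⟩, rfl⟩
    exact h0 hy

theorem card_trace_ne_zero_add [DecidableEq F] (g : F → F) (a : ZMod p) (b : F) :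
    p * #{xy : F × F | Algebra.trace (ZMod p) F (xy.1 + g xy.2) = 0 ∧
        Algebra.trace (ZMod p) F (algebraMap (ZMod p) F a * xy.1 + b * xy.2) ≠ 0} +
      Fintype.card F * #{y : F | Algebra.trace (ZMod p) F (b * y) =
        a * Algebra.trace (ZMod p) F (g y)} = Fintype.card F ^ 2 := by
  rw [Finset.card_eq_sum_card_fiberwise (f := Prod.snd) (t := univ) (fun _ _ => by simp),
    Finset.card_filter, mul_sum, mul_sum, ← sum_add_distrib, sq, ← Finset.card_univ,
    ← smul_eq_mul #(univ : Finset F) #(univ : Finset F), ← sum_const]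
  refine Finset.sum_congr rfl fun y _ => ?_
  have hx : ∀ x : F, Algebra.trace (ZMod p) F (x + g y) = 0 →
      Algebra.trace (ZMod p) F (algebraMap (ZMod p) F a * x + b * y) =
        Algebra.trace (ZMod p) F (b * y) - a * Algebra.trace (ZMod p) F (g y) := by
    intro x h
    rw [map_add] at h
    rw [← Algebra.smul_def, map_add, map_smul, smul_eq_mul]
    linear_combination a * h
  split_ifs with h
  · rw [mul_one, Finset.card_eq_zero.2, mul_zero, zero_add]
    rw [Finset.filter_eq_empty_iff]
    rintro ⟨x, y'⟩ hxy rfl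
    simp only [mem_filter, mem_univ, true_and] at hxy
    exact hxy.2 (by rw [hx x hxy.1, h, sub_self])
  · rw [mul_zero, add_zero, Finset.card_univ, ← card_trace_mul_fiber F (p := p) one_ne_zero
      (-Algebra.trace (ZMod p) F (g y)), mul_comm]
    congr 1
    refine Finset.card_bij (fun xy _ => xy.1) ?_ ?_ ?_
    · rintro ⟨x, y'⟩ hxy
      simp only [mem_filter, mem_univ, true_and, mul_one] at hxy ⊢
      obtain ⟨⟨h2, -⟩, rfl⟩ := hxy
      rw [map_add] at h2
      exact eq_neg_of_add_eq_zero_left h2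
    · rintro ⟨x, y₁⟩ h₁ ⟨x', y₂⟩ h₂ rfl
      simp only [mem_filter] at h₁ h₂
      rw [h₁.2, h₂.2]
    · intro x hxx
      simp only [mem_filter, mem_univ, true_and, mul_one] at hxx
      have h2 : Algebra.trace (ZMod p) F (x + g y) = 0 := by rw [map_add, hxx, neg_add_cancel]
      refine ⟨(x, y), ?_, rfl⟩
      simp only [mem_filter, mem_univ, true_and, and_true]
      exact ⟨h2, by rw [hx x h2]; exact sub_ne_zero.2 h⟩

end QuadraticFiniteField

open QuadraticFiniteField

/-- The number of pairs `(a,b)` with `a ∈ F_p^*`, `b ∈ F_q^*`, such that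
the unique `v ∈ Γ` with `Tr_{q/t}(bv) = 0` satisfies `Tr(v^{p^t-1}) = 0`, is
`((p-1)(p^m-1) + (p^{t+1}-p^t-p+1)·S)/p`; moreover every such pair has
`wt(a,b) = (p^{2m-2}-p^{m-2})(p-1) - p^{m-2}(p^t(p-1) - S)`. -/
theorem stmt11 (p t m : ℕ) [Fact p.Prime] (ht : 2 < t) (hm : m = 2 * t)
    (F : Type) [Field F] [Fintype F] [DecidableEq F] [Algebra (ZMod p) F]
    (hF : Fintype.card F = p ^ m)
    (E : Subfield F) (hE : Nat.card E = p ^ t)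
    (α : Fˣ) (hα : ∀ x : Fˣ, x ∈ Subgroup.zpowers α)
    (Γ : Set F) (hΓ : Γ = {v : F | ∃ j ≤ p ^ t, v = (α : F) ^ j})
    (ζ : ℂ) (hζ : ζ = Complex.exp (2 * Real.pi * Complex.I / p))
    (χ : F → ℂ) (hχ : ∀ x, χ x = ζ ^ (Algebra.trace (ZMod p) F x).val)
    (Δ : Finset F) (hΔ : Δ = univ.filter (fun x : F => x ^ (p ^ t + 1) = 1))
    (S : ℂ) (hS : S = ∑ z ∈ ({0}ᶜ : Finset (ZMod p)), ∑ x ∈ Δ, χ (algebraMap (ZMod p) F z * x))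
    (wt : F → F → ℕ)
    (hwt : ∀ a b : F, wt a b = Set.ncard {xy : F × F | xy ≠ (0, 0) ∧
      Algebra.trace (ZMod p) F (xy.1 + xy.2 ^ (p ^ t - 1)) = 0 ∧
      Algebra.trace (ZMod p) F (a * xy.1 + b * xy.2) ≠ 0})
    (P : Set (F × F))
    (hP : P = {ab : F × F | (∃ z : ZMod p, z ≠ 0 ∧ algebraMap (ZMod p) F z = ab.1) ∧
      ab.2 ≠ 0 ∧ ∃ v ∈ Γ, Algebra.trace E F (ab.2 * v) = 0 ∧
        Algebra.trace (ZMod p) F (v ^ (p ^ t - 1)) = 0}) :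
    (P.ncard : ℂ) = (((p : ℂ) - 1) * ((p : ℂ) ^ m - 1)
        + ((p : ℂ) ^ (t + 1) - (p : ℂ) ^ t - (p : ℂ) + 1) * S) / p ∧
      ∀ ab ∈ P, (wt ab.1 ab.2 : ℂ) =
        ((p : ℂ) ^ (2 * m - 2) - (p : ℂ) ^ (m - 2)) * ((p : ℂ) - 1)
          - (p : ℂ) ^ (m - 2) * ((p : ℂ) ^ t * ((p : ℂ) - 1) - S) := by
  classical
  have hE1 : 1 < p ^ t := hE ▸ Finite.one_lt_card
  have hFQ : Fintype.card F = (p ^ t) ^ 2 := by rw [hF, hm, mul_comm, pow_mul]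
  have hFQ' : (p : ℂ) ^ m = ((p : ℂ) ^ t) ^ 2 := by rw [hm, mul_comm, pow_mul]
  have hp0 : (p : ℂ) ≠ 0 := Nat.cast_ne_zero.2 (Fact.out : p.Prime).ne_zero
  have : CharP F p := charP_of_injective_algebraMap (algebraMap (ZMod p) F).injective p
  have : CharP E p := ((algebraMap E F).charP_iff (algebraMap E F).injective p).2 this
  let : Algebra (ZMod p) E := ZMod.algebra E p
  set Q := p ^ t with hQ
  have hQc : (p : ℂ) ^ t = (Q : ℂ) := by rw [hQ]; push_cast; rfl
  set K := #{u : F | u ^ (Q + 1) = 1 ∧ Algebra.trace (ZMod p) F u = 0} with hK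
  have hζp : IsPrimitiveRoot ζ p :=
    hζ ▸ Complex.isPrimitiveRoot_exp p (Fact.out : p.Prime).ne_zero
  have hSK : S = p * K - (Q + 1) := by
    simp only [hS, hχ]
    rw [sum_zmod_trace_eq hζp, hΔ, Finset.filter_filter, card_pow_add_one_eq_one E hE hFQ]
    push_cast
    rfl
  have hv0 : ∀ v ∈ Γ, v ≠ 0 := by
    rw [hΓ]
    rintro _ ⟨j, -, rfl⟩
    exact pow_ne_zero _ α.ne_zero
  have hrep : ∀ y : F, y ≠ 0 → ∃ v ∈ Γ, v ^ (Q - 1) = y ^ (Q - 1) := by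
    intro y hy
    obtain ⟨k, hk⟩ := (mem_powers_iff_mem_zpowers (x := α)).2 (hα (Units.mk0 y hy))
    have hk' : (α : F) ^ k = y := by simpa using congrArg Units.val hk
    refine ⟨(α : F) ^ (k % (Q + 1)), ?_, ?_⟩
    · rw [hΓ]
      exact ⟨_, Nat.lt_succ_iff.1 (Nat.mod_lt _ (by omega)), rfl⟩
    · rw [← hk', pow_right_comm _ (k % (Q + 1)), pow_right_comm _ k,
        ← pow_eq_pow_mod k (pow_sub_one_pow_add_one hE1 hFQ α.ne_zero)]
  have hPmem : ∀ ab : F × F, ab ∈ P ↔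
      (∃ z : ZMod p, z ≠ 0 ∧ algebraMap (ZMod p) F z = ab.1) ∧
        ab.2 ≠ 0 ∧ Algebra.trace (ZMod p) F (ab.2 ^ (Q - 1)) = 0 := by
    rintro ⟨a, b⟩
    rw [hP, Set.mem_ofPred_eq]
    refine and_congr_right fun _ => and_congr_right fun hb => ?_
    simp only at hb ⊢
    have hneg := trace_neg_inv_pow_sub_one (p := p) E hE hFQ hb
    constructor
    · rintro ⟨v, hvΓ, h0, h1⟩
      rwa [(trace_mul_eq_zero_iff E hE hFQ hb (hv0 v hvΓ)).1 h0, hneg, neg_eq_zero] at h1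
    · intro h
      obtain ⟨y, hy, hyb⟩ :=
        exists_pow_sub_one_eq hE1 hFQ (neg_inv_pow_sub_one_pow_add_one E hE hFQ hb)
      obtain ⟨v, hvΓ, hvy⟩ := hrep y hy
      rw [hyb] at hvy
      refine ⟨v, hvΓ, (trace_mul_eq_zero_iff E hE hFQ hb (hv0 v hvΓ)).2 hvy, ?_⟩
      rw [hvy, hneg, h, neg_zero]
  constructor
  · have hPset : P = ((({0}ᶜ : Finset (ZMod p)).image (algebraMap (ZMod p) F) ×ˢ
        univ.filter fun b : F => b ≠ 0 ∧ Algebra.trace (ZMod p) F (b ^ (Q - 1)) = 0 :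
          Finset (F × F)) : Set (F × F)) := by
      ext ab
      rw [hPmem]
      simp
    rw [hPset, Set.ncard_coe_finset, Finset.card_product,
      Finset.card_image_of_injective _ (algebraMap (ZMod p) F).injective,
      card_trace_pow_sub_one_eq_zero E hE hFQ, Finset.card_compl, ZMod.card,
      Finset.card_singleton, ← hK, hSK, pow_succ, hFQ', hQc]
    push_cast [hE1.le, (Fact.out : p.Prime).one_le]
    field_simp
    ring
  · intro ab hab
    obtain ⟨⟨a, ha, haz⟩, hb, htb⟩ := (hPmem ab).1 hab
    have hcount := card_trace_mul_eq_mul_trace_pow E hE hFQ ha hb htb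
    have hw := card_trace_ne_zero_add (fun y : F => y ^ (Q - 1)) a ab.2
    have hwt' : wt ab.1 ab.2 =
        #{xy : F × F | Algebra.trace (ZMod p) F (xy.1 + xy.2 ^ (Q - 1)) = 0 ∧
          Algebra.trace (ZMod p) F (algebraMap (ZMod p) F a * xy.1 + ab.2 * xy.2) ≠ 0} := by
      rw [hwt, ← Set.ncard_coe_finset, ← haz]
      congr 1
      ext xy
      simp only [Set.mem_ofPred_eq, coe_filter, mem_univ, true_and]
      refine ⟨fun h => h.2, fun h => ⟨?_, h⟩⟩
      rintro rfl
      simp at h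
    rw [← hwt'] at hw
    set N := #{y : F | Algebra.trace (ZMod p) F (ab.2 * y) =
        a * Algebra.trace (ZMod p) F (y ^ (Q - 1))}
    have hcount' : (p : ℂ) * N + p * K = Q ^ 2 + p * Q + p := by exact_mod_cast hcount
    have hw' : (p : ℂ) * wt ab.1 ab.2 + Q ^ 2 * N = (Q ^ 2) ^ 2 := by
      rw [hFQ] at hw
      exact_mod_cast hw
    have e1 : (p : ℂ) ^ 2 * p ^ (m - 2) = Q ^ 2 := by
      rw [← pow_add, ← hQc, ← hFQ']; congr 1; omega
    have e2 : (p : ℂ) ^ 2 * p ^ (2 * m - 2) = (Q ^ 2) ^ 2 := by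
      rw [← pow_add, ← hQc, ← hFQ', ← pow_mul]; congr 1; omega
    apply mul_left_cancel₀ (pow_ne_zero 2 hp0)
    rw [hQc, hSK]
    linear_combination (p : ℂ) * hw' - (Q : ℂ) ^ 2 * hcount' - (p - 1) * e2
      + ((p - 1) + (Q * (p - 1) - (p * K - (Q + 1)))) * e1
end
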